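/- Suppose the network has connectivity at least μ̃ with μ̃ > 3/4, and θ is a stable equilibrium. Then ρ₁² ≥ 1/8, where ρ₁ = (1/n)·∑_j cos(θ_j). -/

import Mathlib

theorem sum_sum_cos_sub {ι : Type*} [Fintype ι] (φ : ι → ℝ) :
    ∑ j, ∑ k, Real.cos (φ k - φ j) = (∑ j, Real.cos (φ j)) ^ 2 + (∑ j, Real.sin (φ j)) ^ 2 := by
  simp only [Real.cos_sub, sq, Finset.sum_mul_sum, Finset.sum_add_distrib]
  congr 1 <;> exact Finset.sum_comm

theorem sum_sum_cos_sub_sq {ι : Type*} [Fintype ι] (θ : ι → ℝ) :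
    ∑ j, ∑ k, Real.cos (θ k - θ j) ^ 2 =
      ((Fintype.card ι : ℝ) ^ 2 + (∑ j, Real.cos (2 * θ j)) ^ 2
        + (∑ j, Real.sin (2 * θ j)) ^ 2) / 2 := by
  have h := sum_sum_cos_sub fun j => 2 * θ j
  have hterm : ∀ j k, Real.cos (θ k - θ j) ^ 2
      = 1 / 2 + 1 / 2 * Real.cos (2 * θ k - 2 * θ j) := fun j k => by
    rw [← mul_sub, Real.cos_sq]; ring
  simp only [hterm, Finset.sum_add_distrib, ← Finset.mul_sum, h, Finset.sum_const,
    Finset.card_univ, nsmul_eq_mul]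
  ring

theorem sum_cos_sub_cos_sq_nonneg_of_stable {ι : Type*} [Fintype ι] (A : ι → ι → ℝ) (θ : ι → ℝ)
    (hstab : ∀ v : ι → ℝ,
      0 ≤ ∑ j, ∑ k, A j k * Real.cos (θ k - θ j) * (v j - v k) ^ 2) :
    0 ≤ ∑ j, ∑ k, A j k * (Real.cos (θ k - θ j) - Real.cos (θ k - θ j) ^ 2) := by
  have h := add_nonneg (hstab fun j => Real.cos (θ j)) (hstab fun j => Real.sin (θ j))
  have hterm : ∀ j k,
      A j k * Real.cos (θ k - θ j) * (Real.cos (θ j) - Real.cos (θ k)) ^ 2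
        + A j k * Real.cos (θ k - θ j) * (Real.sin (θ j) - Real.sin (θ k)) ^ 2
      = 2 * (A j k * (Real.cos (θ k - θ j) - Real.cos (θ k - θ j) ^ 2)) := fun j k => by
    have hd : (Real.cos (θ j) - Real.cos (θ k)) ^ 2 + (Real.sin (θ j) - Real.sin (θ k)) ^ 2
        = 2 - 2 * Real.cos (θ k - θ j) := by
      rw [Real.cos_sub]
      linear_combination Real.sin_sq_add_cos_sq (θ j) + Real.sin_sq_add_cos_sq (θ k)
    rw [← mul_add, hd]; ring
  simp only [← Finset.sum_add_distrib, hterm, ← Finset.mul_sum] at h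
  linarith

/-- At an equilibrium, the missing edges at `j` contribute at most their worst case, two each,
minus a correction controlled by the sine of `θ j`. The parameter `t` is free. -/
theorem sum_compl_cos_sq_sub_cos_le {ι : Type*} [Fintype ι] (a θ : ι → ℝ) (φ t : ℝ)
    (ha : ∀ k, a k ≤ 1) (heq : ∑ k, a k * Real.sin (θ k - φ) = 0)
    (hsin0 : ∑ k, Real.sin (θ k) = 0) :
    ∑ k, (1 - a k) * (Real.cos (θ k - φ) ^ 2 - Real.cos (θ k - φ)) ≤
      (2 + t ^ 2) * ∑ k, (1 - a k) + 2 * t * ((∑ k, Real.cos (θ k)) * Real.sin φ) := by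
  have hs : ∑ k, (1 - a k) * Real.sin (θ k - φ) = -((∑ k, Real.cos (θ k)) * Real.sin φ) := by
    simp only [sub_mul, one_mul, Finset.sum_sub_distrib, heq, sub_zero]
    simp only [Real.sin_sub, Finset.sum_sub_distrib, ← Finset.sum_mul, hsin0]
    ring
  calc _ ≤ ∑ k, ((2 + t ^ 2) * (1 - a k) - 2 * t * ((1 - a k) * Real.sin (θ k - φ))) := by
        refine Finset.sum_le_sum fun k _ => ?_
        have h : Real.cos (θ k - φ) ^ 2 - Real.cos (θ k - φ)
            ≤ 2 + t ^ 2 - 2 * t * Real.sin (θ k - φ) := by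
          nlinarith [Real.sin_sq_add_cos_sq (θ k - φ), Real.neg_one_le_cos (θ k - φ),
            sq_nonneg (Real.sin (θ k - φ) - t)]
        calc _ ≤ (1 - a k) * (2 + t ^ 2 - 2 * t * Real.sin (θ k - φ)) :=
              mul_le_mul_of_nonneg_left h (sub_nonneg.2 (ha k))
          _ = _ := by ring
    _ = _ := by
        rw [Finset.sum_sub_distrib, ← Finset.mul_sum, ← Finset.mul_sum, hs]; ring

/-- If the network has connectivity at least `μ̃ > 3/4` and `θ` is a stable equilibrium, then
`ρ₁² ≥ 1/8`. -/
theorem stable_equilibrium_rho1_sq_ge_eighth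
    (n : ℕ) (hn : 1 ≤ n) (A : Fin n → Fin n → ℝ) (θ : Fin n → ℝ) (μ : ℝ)
    (hμ0 : 3 / 4 < μ) (hμ1 : μ ≤ 1)
    (hsym : ∀ j k, A j k = A k j)
    (h01 : ∀ j k, A j k = 0 ∨ A j k = 1)
    (hdiag : ∀ j, A j j = 1)
    (hconn : ∀ j, μ * n ≤ ∑ k : Fin n, A j k)
    (heq : ∀ j, ∑ k : Fin n, A j k * Real.sin (θ k - θ j) = 0)
    (hstab : ∀ v : Fin n → ℝ,
      0 ≤ ∑ j : Fin n, ∑ k : Fin n,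
            A j k * Real.cos (θ k - θ j) * (v j - v k) ^ 2)
    (hsin0 : ∑ j : Fin n, Real.sin (θ j) = 0)
    (ρ₁ : ℝ) (hρ₁ : ρ₁ = (1 / (n : ℝ)) * ∑ j : Fin n, Real.cos (θ j))
    (hρ₁nonneg : 0 ≤ ρ₁) :
    ρ₁ ^ 2 ≥ 1 / 8 := by
  have hn0 : (0 : ℝ) < n := by exact_mod_cast hn
  have hC : ∑ j, Real.cos (θ j) = n * ρ₁ := by rw [hρ₁]; field_simp
  have hA1 : ∀ j k, A j k ≤ 1 := fun j k => by rcases h01 j k with h | h <;> rw [h] <;> norm_num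
  have hS : ∑ j, Real.sin (θ j) ^ 2 = (n - ∑ j, Real.cos (2 * θ j)) / 2 := by
    have hterm : ∀ j, Real.sin (θ j) ^ 2 = 1 / 2 - 1 / 2 * Real.cos (2 * θ j) := fun j => by
      rw [Real.sin_sq_eq_half_sub]; ring
    simp only [hterm, Finset.sum_sub_distrib, ← Finset.mul_sum, Finset.sum_const,
      Finset.card_univ, Fintype.card_fin, nsmul_eq_mul]
    ring
  have hrow : ∀ j, ∑ k, (1 - A j k) * (Real.cos (θ k - θ j) ^ 2 - Real.cos (θ k - θ j))
      ≤ 2 * ((1 - μ) * n) - 4 * n * ρ₁ ^ 2 * Real.sin (θ j) ^ 2 := fun j => by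
    have h := sum_compl_cos_sq_sub_cos_le (A j) θ (θ j) (-4 * ρ₁ * Real.sin (θ j)) (hA1 j)
      (heq j) hsin0
    have hb : ∑ k, (1 - A j k) ≤ (1 - μ) * n := by
      have hd := hconn j
      simp only [Finset.sum_sub_distrib, Finset.sum_const, Finset.card_univ, Fintype.card_fin,
        nsmul_eq_mul]
      linarith
    have hb4 : (1 - μ) * n ≤ 1 / 4 * n := by gcongr; linarith
    have hsq := sq_nonneg (ρ₁ * Real.sin (θ j))
    have h16 := mul_le_mul_of_nonneg_left (hb.trans hb4) hsq
    rw [hC] at h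
    linarith
  have htot := Finset.sum_le_sum fun j (_ : j ∈ Finset.univ) => hrow j
  have hst := sum_cos_sub_cos_sq_nonneg_of_stable A θ hstab
  have hsplit : ∑ j, ∑ k, A j k * (Real.cos (θ k - θ j) - Real.cos (θ k - θ j) ^ 2)
      = ∑ j, ∑ k, Real.cos (θ k - θ j) - ∑ j, ∑ k, Real.cos (θ k - θ j) ^ 2
        + ∑ j, ∑ k, (1 - A j k) * (Real.cos (θ k - θ j) ^ 2 - Real.cos (θ k - θ j)) := by
    simp only [← Finset.sum_add_distrib, ← Finset.sum_sub_distrib]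
    refine Finset.sum_congr rfl fun j _ => Finset.sum_congr rfl fun k _ => ?_
    ring
  rw [Finset.sum_sub_distrib, Finset.sum_const, ← Finset.mul_sum, hS, Finset.card_univ,
    Fintype.card_fin, nsmul_eq_mul] at htot
  rw [hsplit, sum_sum_cos_sub, sum_sum_cos_sub_sq, hC, hsin0, Fintype.card_fin] at hst
  obtain ⟨r, hr⟩ : ∃ r, ∑ j, Real.cos (2 * θ j) = n * r :=
    ⟨(∑ j, Real.cos (2 * θ j)) / n, by field_simp⟩
  rw [hr] at htot hst
  have hmain : 0 ≤ (n : ℝ) ^ 2 *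
      (ρ₁ ^ 2 - (1 + r ^ 2) / 2 + 2 * (1 - μ) - 2 * ρ₁ ^ 2 * (1 - r)) := by
    linarith [sq_nonneg (∑ j, Real.sin (2 * θ j))]
  have hquad := nonneg_of_mul_nonneg_right hmain (by positivity)
  by_contra! hlt
  nlinarith [sq_nonneg (r - 2 * ρ₁ ^ 2), sq_nonneg ρ₁]
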